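/- Let Y and X be disjoint finite sets of agent and environment atoms, φ_org and φ_new LTLf formulas over Y ∪ X, h a history, and A_org, A_new DFAs over the alphabet 2^(Y∪X) with finitely many states whose accepted words are exactly the finite, possibly empty traces satisfying φ_org and φ_new, respectively. Let G be the product DFA game (A_org)_h × A_new, where (A_org)_h is the DFA progression of A_org through h. Then incremental synthesis for (φ_org, h, φ_new) is realizable if and only if there exists a game strategy κ winning in G; moreover, if κ is winning in G then the induced strategy σ_(G,κ) solves incremental synthesis for (φ_org, h, φ_new). -/

import Mathlib

inductive LTLf (P : Type) : Type where
  | tt : LTLf P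
  | ff : LTLf P
  | atom : P → LTLf P
  | natom : P → LTLf P
  | conj : LTLf P → LTLf P → LTLf P
  | disj : LTLf P → LTLf P → LTLf P
  | next : LTLf P → LTLf P
  | wnext : LTLf P → LTLf P
  | untl : LTLf P → LTLf P → LTLf P
  | release : LTLf P → LTLf P → LTLf P
  deriving DecidableEq

def LTLf.Sat {P : Type} : List (Set P) → LTLf P → Prop
  | _, .tt => True
  | _, .ff => False
  | [], .atom _ => False
  | w :: _, .atom p => p ∈ w
  | [], .natom _ => False
  | w :: _, .natom p => p ∉ w
  | τ, .conj φ₁ φ₂ => LTLf.Sat τ φ₁ ∧ LTLf.Sat τ φ₂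
  | τ, .disj φ₁ φ₂ => LTLf.Sat τ φ₁ ∨ LTLf.Sat τ φ₂
  | [], .next _ => False
  | _ :: τ, .next φ => τ ≠ [] ∧ LTLf.Sat τ φ
  | [], .wnext _ => True
  | _ :: τ, .wnext φ => τ = [] ∨ LTLf.Sat τ φ
  | [], .untl _ _ => False
  | w :: τ, .untl φ₁ φ₂ =>
      LTLf.Sat (w :: τ) φ₂ ∨ (LTLf.Sat (w :: τ) φ₁ ∧ LTLf.Sat τ (.untl φ₁ φ₂))
  | [], .release _ _ => True
  | w :: τ, .release φ₁ φ₂ =>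
      LTLf.Sat (w :: τ) φ₂ ∧ (LTLf.Sat (w :: τ) φ₁ ∨ LTLf.Sat τ (.release φ₁ φ₂))
termination_by τ φ => (τ.length, sizeOf φ)

open Classical in
noncomputable def LTLf.prog {P : Type} : LTLf P → Set P → LTLf P
  | .tt, _ => .tt
  | .ff, _ => .ff
  | .atom p, w => if p ∈ w then .tt else .ff
  | .natom p, w => if p ∈ w then .ff else .tt
  | .conj φ₁ φ₂, w => .conj (φ₁.prog w) (φ₂.prog w)
  | .disj φ₁ φ₂, w => .disj (φ₁.prog w) (φ₂.prog w)
  | .next φ, _ => .conj φ (.untl .tt .tt)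
  | .wnext φ, _ => .disj φ (.release .ff .ff)
  | .untl φ₁ φ₂, w =>
      .disj (φ₂.prog w) (.conj (φ₁.prog w) (.conj (.untl φ₁ φ₂) (.untl .tt .tt)))
  | .release φ₁ φ₂, w =>
      .conj (φ₂.prog w) (.disj (φ₁.prog w) (.disj (.release φ₁ φ₂) (.release .ff .ff)))

noncomputable def LTLf.progTrace {P : Type} (φ : LTLf P) (h : List (Set P)) : LTLf P :=
  h.foldl LTLf.prog φ

/-- The joint interpretation over atoms `Y ⊕ X` determined by an agent move `m.1 ⊆ Y`
and an environment move `m.2 ⊆ X`. -/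
def joint {Y X : Type} (m : Set Y × Set X) : Set (Y ⊕ X) :=
  {a | Sum.elim (· ∈ m.1) (· ∈ m.2) a}

/-- The finite trace (over `2^(Y∪X)`) formed by the first `k` joint moves of a play. -/
def jointTrace {Y X : Type} (π : ℕ → Set Y × Set X) (k : ℕ) : List (Set (Y ⊕ X)) :=
  (List.range k).map fun i => joint (π i)

/-- The finite trace corresponding to a history (finite sequence of joint moves). -/
def histTrace {Y X : Type} (h : List (Set Y × Set X)) : List (Set (Y ⊕ X)) :=
  h.map joint

/-- A play is σ-consistent if at every instant the agent move is the one prescribed by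
the strategy σ on the preceding environment moves (in particular `Y_0 = σ(ε)`). -/
def PlayConsistent {Y X : Type} (σ : List (Set X) → Set Y) (π : ℕ → Set Y × Set X) : Prop :=
  ∀ i : ℕ, (π i).1 = σ ((List.range i).map fun j => (π j).2)

/-- A history is σ-consistent if every agent move in it is prescribed by σ on the
preceding environment moves. -/
def HistConsistent {Y X : Type} (σ : List (Set X) → Set Y) (h : List (Set Y × Set X)) : Prop :=
  ∀ (i : ℕ) (hi : i < h.length), (h.get ⟨i, hi⟩).1 = σ ((h.take i).map Prod.snd)
/-- A strategy σ is winning for the LTLf formula φ over atoms Y ∪ X if every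
σ-consistent play has a finite, possibly empty, prefix satisfying φ. -/
def WinningFor {Y X : Type} (σ : List (Set X) → Set Y) (φ : LTLf (Y ⊕ X)) : Prop :=
  ∀ π : ℕ → Set Y × Set X, PlayConsistent σ π → ∃ k : ℕ, LTLf.Sat (jointTrace π k) φ

/-- A strategy σ is winning for φ assuming the history h if for every σ-consistent play τ
the concatenation h·τ has a finite, possibly empty, prefix (extending h) satisfying φ. -/
def WinningAssuming {Y X : Type} (σ : List (Set X) → Set Y) (φ : LTLf (Y ⊕ X))
    (h : List (Set Y × Set X)) : Prop :=
  ∀ π : ℕ → Set Y × Set X, PlayConsistent σ π →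
    ∃ k : ℕ, LTLf.Sat (histTrace h ++ jointTrace π k) φ

/-- A strategy σ solves incremental synthesis for (φ_org, h, φ_new) if every σ-consistent
play has a finite, possibly empty, prefix ρ such that h·ρ satisfies φ_org and ρ
satisfies φ_new. -/
def SolvesIncremental {Y X : Type} (σ : List (Set X) → Set Y) (φorg : LTLf (Y ⊕ X))
    (h : List (Set Y × Set X)) (φnew : LTLf (Y ⊕ X)) : Prop :=
  ∀ π : ℕ → Set Y × Set X, PlayConsistent σ π →
    ∃ k : ℕ, LTLf.Sat (histTrace h ++ jointTrace π k) φorg ∧ LTLf.Sat (jointTrace π k) φnew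

/-- The DFA progression of `A` through the word `h`: same DFA, but with start state
progressed to the state that `A` reaches from its start state on reading `h`. -/
def DFA.progress {α σ : Type*} (A : DFA α σ) (h : List α) : DFA α σ where
  step := A.step
  start := A.evalFrom A.start h
  accept := A.accept

/-- The product of two DFAs over a common alphabet: pairs of states, componentwise
transitions, pairs of accepting states. -/
def DFA.product {α σ₁ σ₂ : Type*} (A₁ : DFA α σ₁) (A₂ : DFA α σ₂) : DFA α (σ₁ × σ₂) where
  step := fun s a => (A₁.step s.1 a, A₂.step s.2 a)
  start := (A₁.start, A₂.start)
  accept := {s | s.1 ∈ A₁.accept ∧ s.2 ∈ A₂.accept}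
/-- A play is κ-consistent in the DFA game `G` if at every instant the agent move is the
one prescribed by the game strategy κ on the state that `G` reaches from its start state
on reading the joint trace so far (in particular `Y_0 = κ(ι)`). -/
def GameConsistent {Y X S : Type} (G : DFA (Set (Y ⊕ X)) S) (κ : S → Set Y)
    (π : ℕ → Set Y × Set X) : Prop :=
  ∀ i : ℕ, (π i).1 = κ (G.evalFrom G.start (jointTrace π i))

/-- A game strategy κ is winning in the DFA game `G` if every κ-consistent play has a
finite prefix accepted by `G`. -/
def GameWinning {Y X S : Type} (G : DFA (Set (Y ⊕ X)) S) (κ : S → Set Y) : Prop :=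
  ∀ π : ℕ → Set Y × Set X, GameConsistent G κ π →
    ∃ k : ℕ, G.evalFrom G.start (jointTrace π k) ∈ G.accept

/-- The fixpoint approximants of the winning region: W₀ = F and
W_{i+1} = W_i ∪ { s | ∃ Y' ⊆ Y, ∀ X' ⊆ X, δ(s, Y'∪X') ∈ W_i }. -/
def WinApprox {Y X S : Type} (G : DFA (Set (Y ⊕ X)) S) : ℕ → Set S
  | 0 => G.accept
  | i + 1 => WinApprox G i ∪
      {s | ∃ A : Set Y, ∀ E : Set X, G.step s (joint (A, E)) ∈ WinApprox G i}

/-- The state of the DFA game `G` reached from state `s` against the environment move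
sequence `e` when the agent plays according to the game strategy κ. -/
def inducedState {Y X S : Type} (G : DFA (Set (Y ⊕ X)) S) (κ : S → Set Y) :
    S → List (Set X) → S
  | s, [] => s
  | s, x :: e => inducedState G κ (G.step s (joint (κ s, x))) e

/-- The agent strategy induced by the game strategy κ on the DFA game `G`:
σ(ε) = κ(ι) and σ(X₀⋯Xₙ) = κ(δ(ι, (Y₀∪X₀)⋯(Yₙ∪Xₙ))) with the agent moves Yᵢ
themselves determined recursively by the strategy. -/
def inducedStrategy {Y X S : Type} (G : DFA (Set (Y ⊕ X)) S) (κ : S → Set Y)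
    (e : List (Set X)) : Set Y :=
  κ (inducedState G κ G.start e)
section DFAGame

variable {Y X S : Type} (G : DFA (Set (Y ⊕ X)) S)

theorem jointTrace_succ (π : ℕ → Set Y × Set X) (k : ℕ) :
    jointTrace π (k + 1) = jointTrace π k ++ [joint (π k)] := by
  simp [jointTrace, List.range_succ]

theorem evalFrom_jointTrace_succ (s : S) (π : ℕ → Set Y × Set X) (k : ℕ) :
    G.evalFrom s (jointTrace π (k + 1)) =
      G.step (G.evalFrom s (jointTrace π k)) (joint (π k)) := by
  rw [jointTrace_succ, DFA.evalFrom_append_singleton]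

theorem DFA.evalFrom_product {α S₁ S₂ : Type*} (A₁ : DFA α S₁) (A₂ : DFA α S₂)
    (s : S₁ × S₂) (w : List α) :
    (A₁.product A₂).evalFrom s w = (A₁.evalFrom s.1 w, A₂.evalFrom s.2 w) := by
  induction w generalizing s with
  | nil => rfl
  | cons a w ih => simp only [DFA.evalFrom_cons, ih]; rfl

theorem DFA.evalFrom_progress {α S : Type*} (A : DFA α S) (h : List α) (s : S) (w : List α) :
    (A.progress h).evalFrom s w = A.evalFrom s w := rfl

theorem inducedState_append (κ : S → Set Y) (s : S) (e₁ e₂ : List (Set X)) :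
    inducedState G κ s (e₁ ++ e₂) = inducedState G κ (inducedState G κ s e₁) e₂ := by
  induction e₁ generalizing s with
  | nil => rfl
  | cons x e ih => exact ih _

theorem inducedState_eq_evalFrom {κ : S → Set Y} {π : ℕ → Set Y × Set X}
    (hπ : PlayConsistent (inducedStrategy G κ) π) (k : ℕ) :
    inducedState G κ G.start ((List.range k).map fun j => (π j).2) =
      G.evalFrom G.start (jointTrace π k) := by
  induction k with
  | zero => rfl
  | succ k ih =>
    rw [evalFrom_jointTrace_succ, ← ih, List.range_succ, List.map_append, inducedState_append]
    have hmove : κ (inducedState G κ G.start ((List.range k).map fun j => (π j).2)) = (π k).1 :=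
      (hπ k).symm
    simp only [List.map_cons, List.map_nil, inducedState, hmove]

theorem PlayConsistent.gameConsistent {κ : S → Set Y} {π : ℕ → Set Y × Set X}
    (hπ : PlayConsistent (inducedStrategy G κ) π) : GameConsistent G κ π := fun i => by
  rw [hπ i, inducedStrategy, inducedState_eq_evalFrom G hπ]

theorem winApprox_mono : Monotone (WinApprox G) :=
  monotone_nat_of_le_succ fun _ => Set.subset_union_left

/-- A single positional strategy makes progress through the approximants from every state of
the winning region. -/
theorem exists_progressing_strategy :
    ∃ κ : S → Set Y, ∀ s n, s ∈ WinApprox G n →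
      s ∈ G.accept ∨ ∃ m < n, ∀ E : Set X, G.step s (joint (κ s, E)) ∈ WinApprox G m := by
  classical
  have hmove : ∀ s, ∃ A : Set Y, ∀ n, s ∈ WinApprox G n →
      s ∈ G.accept ∨ ∃ m < n, ∀ E : Set X, G.step s (joint (A, E)) ∈ WinApprox G m := by
    intro s
    by_cases hs : ∃ n, s ∈ WinApprox G n
    · rcases hr : Nat.find hs with _ | m
      · have hacc := Nat.find_spec hs
        rw [hr] at hacc
        exact ⟨∅, fun _ _ => Or.inl hacc⟩
      · have hmem := Nat.find_spec hs
        rw [hr] at hmem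
        have hnot : s ∉ WinApprox G m := Nat.find_min hs (by omega)
        obtain ⟨A, hA⟩ := hmem.resolve_left hnot
        refine ⟨A, fun n hn => Or.inr ⟨m, ?_, hA⟩⟩
        have := Nat.find_min' hs hn
        omega
    · exact ⟨∅, fun n hn => (hs ⟨n, hn⟩).elim⟩
  choose κ hκ using hmove
  exact ⟨κ, hκ⟩

theorem exists_gameWinning_of_start_mem {n : ℕ} (hn : G.start ∈ WinApprox G n) :
    ∃ κ : S → Set Y, GameWinning G κ := by
  obtain ⟨κ, hκ⟩ := exists_progressing_strategy G
  refine ⟨κ, fun π hπ => ?_⟩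
  have hreach : ∀ n k, G.evalFrom G.start (jointTrace π k) ∈ WinApprox G n →
      ∃ k, G.evalFrom G.start (jointTrace π k) ∈ G.accept := by
    intro n
    induction n using Nat.strong_induction_on with
    | _ n ih =>
      intro k hk
      rcases hκ _ n hk with hacc | ⟨m, hm, hstep⟩
      · exact ⟨k, hacc⟩
      · refine ih m hm (k + 1) ?_
        rw [evalFrom_jointTrace_succ]
        have := hstep (π k).2
        rwa [← hπ k] at this
  exact hreach n 0 hn

theorem exists_escaping_move [Finite X] {s : S} (hs : ∀ n, s ∉ WinApprox G n) (A : Set Y) :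
    ∃ E : Set X, ∀ n, G.step s (joint (A, E)) ∉ WinApprox G n := by
  by_contra! hwin
  choose r hr using hwin
  obtain ⟨b, hb⟩ := (Set.finite_range r).bddAbove
  exact hs (b + 1) (Or.inr ⟨A, fun E => winApprox_mono G (hb ⟨E, rfl⟩) (hr E)⟩)

/-- From outside the winning region the environment can keep any agent strategy, even one with
memory, away from the accepting states. -/
theorem exists_avoiding_play [Finite X] (hstart : ∀ n, G.start ∉ WinApprox G n)
    (σ : List (Set X) → Set Y) :
    ∃ π : ℕ → Set Y × Set X, PlayConsistent σ π ∧
      ∀ k, G.evalFrom G.start (jointTrace π k) ∉ G.accept := by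
  have hmove : ∀ (s : S) (A : Set Y), ∃ E : Set X, (∀ n, s ∉ WinApprox G n) →
      ∀ n, G.step s (joint (A, E)) ∉ WinApprox G n := by
    intro s A
    by_cases hs : ∀ n, s ∉ WinApprox G n
    · obtain ⟨E, hE⟩ := exists_escaping_move G hs A
      exact ⟨E, fun _ => hE⟩
    · exact ⟨∅, fun h => (hs h).elim⟩
  choose env henv using hmove
  let move : List (Set X) × S → Set Y × Set X := fun c => (σ c.1, env c.2 (σ c.1))
  let config : ℕ → List (Set X) × S := fun k => Nat.rec ([], G.start)
    (fun _ c => (c.1 ++ [(move c).2], G.step c.2 (joint (move c)))) k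
  let π : ℕ → Set Y × Set X := fun k => move (config k)
  have hhist : ∀ k, (config k).1 = (List.range k).map fun j => (π j).2 := by
    intro k
    induction k with
    | zero => rfl
    | succ k ih =>
      rw [List.range_succ, List.map_append, ← ih]
      rfl
  have hstate : ∀ k, (config k).2 = G.evalFrom G.start (jointTrace π k) := by
    intro k
    induction k with
    | zero => rfl
    | succ k ih =>
      rw [evalFrom_jointTrace_succ, ← ih]
  have havoid : ∀ k n, (config k).2 ∉ WinApprox G n := by
    intro k
    induction k with
    | zero => exact hstart
    | succ k ih => exact henv _ _ ih
  refine ⟨π, fun i => ?_, fun k => ?_⟩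
  · rw [← hhist]
  · rw [← hstate]
    exact havoid k 0

end DFAGame

/-- Acceptance by the product game is joint satisfaction of the original goal after the history
and of the new goal. -/
theorem mem_accept_product_iff {Y X S₁ S₂ : Type} {φorg φnew : LTLf (Y ⊕ X)}
    {Aorg : DFA (Set (Y ⊕ X)) S₁} {Anew : DFA (Set (Y ⊕ X)) S₂}
    (horg : ∀ τ : List (Set (Y ⊕ X)), τ ∈ Aorg.accepts ↔ LTLf.Sat τ φorg)
    (hnew : ∀ τ : List (Set (Y ⊕ X)), τ ∈ Anew.accepts ↔ LTLf.Sat τ φnew)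
    (u w : List (Set (Y ⊕ X))) :
    ((Aorg.progress u).product Anew).evalFrom ((Aorg.progress u).product Anew).start w ∈
        ((Aorg.progress u).product Anew).accept ↔
      LTLf.Sat (u ++ w) φorg ∧ LTLf.Sat w φnew := by
  rw [← horg, ← hnew, DFA.evalFrom_product, DFA.evalFrom_progress, DFA.mem_accepts,
    DFA.mem_accepts, DFA.eval, DFA.eval, DFA.evalFrom_of_append]
  rfl

/-- Let A_org, A_new accept exactly the finite, possibly empty, traces
satisfying φ_org and φ_new respectively, and let G = (A_org)_h × A_new. Then incremental
synthesis for (φ_org, h, φ_new) is realizable iff some game strategy is winning in G;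
moreover every winning game strategy κ in G induces a strategy σ_(G,κ) solving
incremental synthesis for (φ_org, h, φ_new). -/
theorem incremental_synthesis_via_dfa_game {Y X S₁ S₂ : Type}
    [Fintype Y] [Fintype X] [Fintype S₁] [Fintype S₂]
    (φorg φnew : LTLf (Y ⊕ X)) (h : List (Set Y × Set X))
    (Aorg : DFA (Set (Y ⊕ X)) S₁) (Anew : DFA (Set (Y ⊕ X)) S₂)
    (horg : ∀ τ : List (Set (Y ⊕ X)), τ ∈ Aorg.accepts ↔ LTLf.Sat τ φorg)
    (hnew : ∀ τ : List (Set (Y ⊕ X)), τ ∈ Anew.accepts ↔ LTLf.Sat τ φnew) :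
    ((∃ σ : List (Set X) → Set Y, SolvesIncremental σ φorg h φnew) ↔
        (∃ κ : S₁ × S₂ → Set Y,
          GameWinning ((Aorg.progress (histTrace h)).product Anew) κ)) ∧
      ∀ κ : S₁ × S₂ → Set Y,
        GameWinning ((Aorg.progress (histTrace h)).product Anew) κ →
          SolvesIncremental
            (inducedStrategy ((Aorg.progress (histTrace h)).product Anew) κ)
            φorg h φnew := by
  have hsolve : ∀ κ : S₁ × S₂ → Set Y,
      GameWinning ((Aorg.progress (histTrace h)).product Anew) κ →
        SolvesIncremental
          (inducedStrategy ((Aorg.progress (histTrace h)).product Anew) κ)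
          φorg h φnew := by
    intro κ hκ π hπ
    obtain ⟨k, hk⟩ := hκ π (hπ.gameConsistent _)
    exact ⟨k, (mem_accept_product_iff horg hnew _ _).1 hk⟩
  refine ⟨⟨?_, fun ⟨κ, hκ⟩ => ⟨_, hsolve κ hκ⟩⟩, hsolve⟩
  rintro ⟨σ, hσ⟩
  by_contra hlose
  obtain ⟨π, hπ, havoid⟩ := exists_avoiding_play
    ((Aorg.progress (histTrace h)).product Anew)
    (fun n hn => hlose (exists_gameWinning_of_start_mem _ hn)) σ
  obtain ⟨k, hk⟩ := hσ π hπ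
  exact havoid k ((mem_accept_product_iff horg hnew _ _).2 hk)
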